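/- arXiv:1203.0253 — 6 statements merged into one kernel-verified Lean document; each statement's English description precedes it below -/
import Mathlib

section
/- Let f ∈ ℝ[X₁,…,Xₙ], let e ≥ 0 be an integer, set d = e + ⌈deg(f)/2⌉, and let 𝒯 be a subset of the set of monomials of total degree ≤ e. Then f ∈ RSOS(𝒯) if and only if there exist real symmetric positive semidefinite matrices W¹ (with rows and columns indexed by the exponent multi-indices of degree ≤ d) and W² (with rows and columns indexed by the exponents of the monomials in 𝒯) with trace(W²) = 1 such that the polynomial identity Σ_{α,β} W¹_{α,β} X^{α+β} = f(X) · Σ_{γ,δ} W²_{γ,δ} X^{γ+δ} holds. -/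
open MvPolynomial

/-- Exponent multi-indices in `n` variables of total degree at most `d`
(the exponents of the monomials of total degree `≤ d`). -/
abbrev Idx (n d : ℕ) : Type := {α : Fin n →₀ ℕ // α.degree ≤ d}

noncomputable instance (n d : ℕ) : Fintype (Idx n d) :=
  Set.Finite.fintype (s := {α : Fin n →₀ ℕ | α.degree ≤ d}) <| by
    apply Set.Finite.subset
      (Set.finite_Iic (Finsupp.equivFunOnFinite.symm fun _ : Fin n => d))
    intro α hα
    simp only [Set.mem_Iic, Finsupp.le_def]
    intro i
    exact le_trans (Finsupp.le_degree i α) hα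

/-- `f ∈ RSOS(𝒯)` : there are polynomials `u₁,…,u_l, v₁,…,v_{l'}` with
`supp(vⱼ) ⊆ 𝒯` for all `j` and `Σⱼ vⱼ² ≠ 0` such that `f · Σⱼ vⱼ² = Σᵢ uᵢ²`. -/
def RSOS (n : ℕ) (𝒯 : Finset (Fin n →₀ ℕ)) (f : MvPolynomial (Fin n) ℝ) : Prop :=
  ∃ (l l' : ℕ) (u : Fin l → MvPolynomial (Fin n) ℝ)
    (v : Fin l' → MvPolynomial (Fin n) ℝ),
    (∀ j, (v j).support ⊆ 𝒯) ∧ (∑ j, v j ^ 2) ≠ 0 ∧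
      f * (∑ j, v j ^ 2) = ∑ i, u i ^ 2

/-- `f/g ∈ RSOS(𝒯)` for a rational function `f/g` : there are polynomials
`u₁,…,u_l, v₁,…,v_{l'}` with `supp(vⱼ) ⊆ 𝒯` for all `j` and `Σⱼ vⱼ² ≠ 0`
such that `f · Σⱼ vⱼ² = g · Σᵢ uᵢ²`. -/
def RSOSfrac (n : ℕ) (𝒯 : Finset (Fin n →₀ ℕ)) (f g : MvPolynomial (Fin n) ℝ) : Prop :=
  ∃ (l l' : ℕ) (u : Fin l → MvPolynomial (Fin n) ℝ)
    (v : Fin l' → MvPolynomial (Fin n) ℝ),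
    (∀ j, (v j).support ⊆ 𝒯) ∧ (∑ j, v j ^ 2) ≠ 0 ∧
      f * (∑ j, v j ^ 2) = g * ∑ i, u i ^ 2

/-- The moment matrix of order `t` of a sequence `y`, with rows and columns
indexed by multi-indices of degree `≤ t` and `(α,β)` entry `y_{α+β}`. -/
noncomputable def momentMatrix (n t : ℕ) (y : (Fin n →₀ ℕ) → ℝ) :
    Matrix (Idx n t) (Idx n t) ℝ :=
  fun α β => y (α.1 + β.1)

/-- The localizing moment matrix `M_t(qy)` of order `t`, with `(α,β)` entry
`Σ_γ q_γ y_{γ+α+β}`. -/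
noncomputable def locMomentMatrix (n t : ℕ) (q : MvPolynomial (Fin n) ℝ)
    (y : (Fin n →₀ ℕ) → ℝ) : Matrix (Idx n t) (Idx n t) ℝ :=
  fun α β => ∑ γ ∈ q.support, q.coeff γ * y (γ + α.1 + β.1)

/-- The localizing moment matrix `M(qy)` with rows and columns indexed by the
exponents of the monomials in `𝒯`, with `(α,β)` entry `Σ_γ q_γ y_{γ+α+β}`. -/
noncomputable def locMomentMatrixOn (n : ℕ) (𝒯 : Finset (Fin n →₀ ℕ))
    (q : MvPolynomial (Fin n) ℝ) (y : (Fin n →₀ ℕ) → ℝ) : Matrix 𝒯 𝒯 ℝ :=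
  fun α β => ∑ γ ∈ q.support, q.coeff γ * y (γ + α.1 + β.1)

/-- The linear form `L_y(p) = Σ_α y_α p_α` associated to a sequence `y`. -/
noncomputable def LForm (n : ℕ) (y : (Fin n →₀ ℕ) → ℝ)
    (p : MvPolynomial (Fin n) ℝ) : ℝ :=
  ∑ α ∈ p.support, y α * p.coeff α

/-- `p` is a sum of squares of polynomials. -/
def IsSOS (n : ℕ) (p : MvPolynomial (Fin n) ℝ) : Prop :=
  ∃ (l : ℕ) (u : Fin l → MvPolynomial (Fin n) ℝ), p = ∑ i, u i ^ 2

section SumsOfSquares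

variable {n : ℕ} {ι κ : Type*} [Fintype ι] [Fintype κ]

/-- The polynomial of a Gram matrix `Bᴴ * B` is the sum of squares of the polynomials whose
coefficients are the rows of `B`. -/
theorem sum_monomial_conjTranspose_mul_self (m : ι → Fin n →₀ ℕ) (B : Matrix κ ι ℝ) :
    ∑ α, ∑ β, monomial (m α + m β) ((B.conjTranspose * B) α β) =
      ∑ k, (∑ α, monomial (m α) (B k α)) ^ 2 := by
  simp only [sq, Finset.sum_mul_sum, monomial_mul, Matrix.mul_apply, Matrix.conjTranspose_apply,
    star_trivial, map_sum]
  conv_rhs => rw [Finset.sum_comm]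
  exact Finset.sum_congr rfl fun α _ => Finset.sum_comm

theorem coeff_sum_monomial {m : ι → Fin n →₀ ℕ} (hm : Function.Injective m) (c : ι → ℝ) (α : ι) :
    coeff (m α) (∑ β, monomial (m β) (c β)) = c α := by
  classical
  simp [coeff_sum, coeff_monomial, hm.eq_iff]

theorem support_sum_monomial_subset (m : ι → Fin n →₀ ℕ) (c : ι → ℝ) :
    (↑(∑ β, monomial (m β) (c β)).support : Set (Fin n →₀ ℕ)) ⊆ Set.range m := by
  classical
  intro a ha
  by_contra h
  refine mem_support_iff.1 ha ?_
  rw [coeff_sum]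
  refine Finset.sum_eq_zero fun β _ => ?_
  rw [coeff_monomial, if_neg fun hβ => h ⟨β, hβ⟩]

theorem sum_monomial_coeff {m : ι → Fin n →₀ ℕ} (hm : Function.Injective m)
    {p : MvPolynomial (Fin n) ℝ} (hp : (↑p.support : Set (Fin n →₀ ℕ)) ⊆ Set.range m) :
    ∑ α, monomial (m α) (coeff (m α) p) = p := by
  ext a
  by_cases ha : a ∈ Set.range m
  · obtain ⟨α, rfl⟩ := ha
    exact coeff_sum_monomial hm _ α
  · rw [notMem_support_iff.1 fun h => ha (support_sum_monomial_subset m _ h),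
      notMem_support_iff.1 fun h => ha (hp h)]

/-- The leading terms of a sum of squares of real polynomials do not cancel. -/
theorem exists_coeff_sum_sq_ne_zero (u : κ → MvPolynomial (Fin n) ℝ) {i : κ} (hi : u i ≠ 0) :
    ∃ a, coeff (a + a) (∑ j, u j ^ 2) ≠ 0 ∧ ∀ j, (u j).totalDegree ≤ a.degree := by
  classical
  let o : MonomialOrder (Fin n) := MonomialOrder.degLex
  obtain ⟨k, hk, hmax⟩ := (Finset.univ.filter fun j => u j ≠ 0).exists_max_image
    (fun j => o.toSyn (o.degree (u j))) ⟨i, by simpa using hi⟩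
  have hle : ∀ j, o.toSyn (o.degree (u j)) ≤ o.toSyn (o.degree (u k)) := by
    intro j
    by_cases hj : u j = 0
    · rw [hj, o.degree_zero, map_zero]
      exact bot_le
    · exact hmax j (by simpa using hj)
  refine ⟨o.degree (u k), ?_, fun j => ?_⟩
  · simp only [sq, coeff_sum]
    rw [Finset.sum_congr rfl fun j _ => o.coeff_mul_of_add_of_degree_le (hle j) (hle j)]
    refine (Finset.sum_pos' (fun j _ => mul_self_nonneg _) ⟨k, Finset.mem_univ k, ?_⟩).ne'
    exact mul_self_pos.2 (o.coeff_degree_ne_zero_iff.2 (by simpa using hk))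
  · exact (degLex_totalDegree_monotone (hle j)).trans_eq degree_degLexDegree.symm

theorem eq_zero_of_sum_sq_eq_zero {u : κ → MvPolynomial (Fin n) ℝ} (h : ∑ j, u j ^ 2 = 0) (j : κ) :
    u j = 0 := by
  by_contra hj
  obtain ⟨a, ha, -⟩ := exists_coeff_sum_sq_ne_zero u hj
  exact ha (by rw [h, coeff_zero])

theorem totalDegree_le_of_totalDegree_sum_sq_le {u : κ → MvPolynomial (Fin n) ℝ} {d : ℕ}
    (h : (∑ j, u j ^ 2).totalDegree ≤ 2 * d) (j : κ) : (u j).totalDegree ≤ d := by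
  by_cases hj : u j = 0
  · simp [hj]
  obtain ⟨a, ha, hdeg⟩ := exists_coeff_sum_sq_ne_zero u hj
  have h₁ : (a + a).degree ≤ (∑ j, u j ^ 2).totalDegree := le_totalDegree (mem_support_iff.2 ha)
  rw [map_add] at h₁
  have h₂ := hdeg j
  omega

open scoped MatrixOrder Matrix.Norms.L2Operator in
theorem Matrix.PosSemidef.exists_eq_conjTranspose_mul_self {W : Matrix ι ι ℝ}
    (hW : W.PosSemidef) : ∃ B : Matrix ι ι ℝ, W = B.conjTranspose * B := by
  classical
  exact CStarAlgebra.nonneg_iff_eq_star_mul_self.1 hW.nonneg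

/-- A positive semidefinite Gram matrix represents a sum of squares, which vanishes only if the
matrix does. -/
theorem Matrix.PosSemidef.exists_sum_monomial_eq_sum_sq {m : ι → Fin n →₀ ℕ}
    (hm : Function.Injective m) {W : Matrix ι ι ℝ} (hW : W.PosSemidef) :
    ∃ (l : ℕ) (u : Fin l → MvPolynomial (Fin n) ℝ),
      (∀ j, (↑(u j).support : Set (Fin n →₀ ℕ)) ⊆ Set.range m) ∧
      (∑ j, u j ^ 2 = 0 → W = 0) ∧
      ∑ α, ∑ β, monomial (m α + m β) (W α β) = ∑ j, u j ^ 2 := by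
  obtain ⟨B, rfl⟩ := hW.exists_eq_conjTranspose_mul_self
  have hsum : ∑ j : Fin (Fintype.card ι),
      (∑ α, monomial (m α) (B ((Fintype.equivFin ι).symm j) α)) ^ 2 =
        ∑ k, (∑ α, monomial (m α) (B k α)) ^ 2 :=
    (Fintype.equivFin ι).symm.sum_comp fun k => (∑ α, monomial (m α) (B k α)) ^ 2
  refine ⟨Fintype.card ι, fun j => ∑ α, monomial (m α) (B ((Fintype.equivFin ι).symm j) α),
    fun j => support_sum_monomial_subset m _, fun h => ?_, ?_⟩
  · have hB : B = 0 := by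
      ext k α
      rw [← coeff_sum_monomial hm (B k) α, eq_zero_of_sum_sq_eq_zero (hsum.symm.trans h) k]
      simp
    simp [hB]
  · rw [hsum, sum_monomial_conjTranspose_mul_self]

/-- A sum of squares of polynomials supported on the monomials `m` has a positive semidefinite
Gram matrix indexed by them, of positive trace if the sum is nonzero. -/
theorem exists_posSemidef_sum_monomial_eq_sum_sq {m : ι → Fin n →₀ ℕ} (hm : Function.Injective m)
    {u : κ → MvPolynomial (Fin n) ℝ}
    (hu : ∀ j, (↑(u j).support : Set (Fin n →₀ ℕ)) ⊆ Set.range m) :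
    ∃ W : Matrix ι ι ℝ, W.PosSemidef ∧ (∑ j, u j ^ 2 ≠ 0 → 0 < W.trace) ∧
      ∑ α, ∑ β, monomial (m α + m β) (W α β) = ∑ j, u j ^ 2 := by
  let B : Matrix κ ι ℝ := Matrix.of fun j α => coeff (m α) (u j)
  have hsum : ∑ α, ∑ β, monomial (m α + m β) ((B.conjTranspose * B) α β) = ∑ j, u j ^ 2 := by
    rw [sum_monomial_conjTranspose_mul_self]
    exact Finset.sum_congr rfl fun j _ => congrArg (· ^ 2) (sum_monomial_coeff hm (hu j))
  have hpos := Matrix.posSemidef_conjTranspose_mul_self B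
  refine ⟨_, hpos, fun hne => hpos.trace_nonneg.lt_of_ne' fun htr => hne ?_, hsum⟩
  rw [← hsum, hpos.trace_eq_zero_iff.1 htr]
  simp

end SumsOfSquares

/-- `f ∈ RSOS(𝒯)` iff there are PSD matrices `W¹` (indexed by the
multi-indices of degree `≤ d`, `d = e + ⌈deg f / 2⌉`) and `W²` (indexed by the
exponents of the monomials in `𝒯`) with `trace W² = 1` such that
`Σ_{α,β} W¹_{α,β} X^{α+β} = f · Σ_{γ,δ} W²_{γ,δ} X^{γ+δ}`. -/
theorem statement0 (n e : ℕ) (f : MvPolynomial (Fin n) ℝ)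
    (𝒯 : Finset (Fin n →₀ ℕ)) (h𝒯 : ∀ α ∈ 𝒯, α.degree ≤ e) :
    RSOS n 𝒯 f ↔
      ∃ (W₁ : Matrix (Idx n (e + (f.totalDegree + 1) / 2))
              (Idx n (e + (f.totalDegree + 1) / 2)) ℝ)
        (W₂ : Matrix 𝒯 𝒯 ℝ),
        W₁.PosSemidef ∧ W₂.PosSemidef ∧ W₂.trace = 1 ∧
        (∑ α, ∑ β, monomial (α.1 + β.1) (W₁ α β)) =
          f * ∑ γ, ∑ δ, monomial (γ.1 + δ.1) (W₂ γ δ) := by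
  have hinj₁ : Function.Injective
    (Subtype.val : Idx n (e + (f.totalDegree + 1) / 2) → Fin n →₀ ℕ) := Subtype.val_injective
  have hinj₂ : Function.Injective (Subtype.val : 𝒯 → Fin n →₀ ℕ) := Subtype.val_injective
  constructor
  · rintro ⟨l, l', u, v, hv, hne, h⟩
    obtain ⟨W₂, hW₂, htr, hsum₂⟩ := exists_posSemidef_sum_monomial_eq_sum_sq hinj₂ (u := v)
      fun j a ha => ⟨⟨a, hv j ha⟩, rfl⟩
    have hdeg_v : (∑ j, v j ^ 2).totalDegree ≤ 2 * e := by
      refine totalDegree_finsetSum_le fun j _ => (totalDegree_pow _ _).trans ?_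
      exact Nat.mul_le_mul_left 2 (Finset.sup_le fun a ha => h𝒯 a (hv j ha))
    have hdeg_u : (∑ i, u i ^ 2).totalDegree ≤ 2 * (e + (f.totalDegree + 1) / 2) := by
      rw [← h]
      refine (totalDegree_mul _ _).trans ?_
      omega
    obtain ⟨W₁, hW₁, -, hsum₁⟩ := exists_posSemidef_sum_monomial_eq_sum_sq hinj₁ (u := u)
      fun i a ha => ⟨⟨a, (le_totalDegree ha).trans
        (totalDegree_le_of_totalDegree_sum_sq_le hdeg_u i)⟩, rfl⟩
    have ht := htr hne
    refine ⟨W₂.trace⁻¹ • W₁, W₂.trace⁻¹ • W₂, hW₁.smul (inv_nonneg.2 ht.le),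
      hW₂.smul (inv_nonneg.2 ht.le), ?_, ?_⟩
    · rw [Matrix.trace_smul, smul_eq_mul, inv_mul_cancel₀ ht.ne']
    · simp only [Matrix.smul_apply, ← smul_monomial, ← Finset.smul_sum]
      rw [hsum₁, hsum₂, mul_smul_comm, h]
  · rintro ⟨W₁, W₂, hW₁, hW₂, htr, h⟩
    obtain ⟨l, u, -, -, hu⟩ := hW₁.exists_sum_monomial_eq_sum_sq hinj₁
    obtain ⟨l', v, hv, hv₀, hv'⟩ := hW₂.exists_sum_monomial_eq_sum_sq hinj₂
    refine ⟨l, l', u, v, fun j a ha => ?_, fun h₀ => ?_, ?_⟩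
    · obtain ⟨α, rfl⟩ := hv j ha
      exact α.2
    · simp [hv₀ h₀] at htr
    · rw [← hv', ← hu, h]
end

section
/- (Semidefinite Farkas Lemma.) Let A₁,…,A_l be real symmetric k×k matrices and let b ∈ ℝˡ. Suppose there exists a vector y ∈ ℝˡ such that Σ_{i=1}^l y_i A_i is positive definite. Then exactly one of the following holds: (1) there exists a real symmetric positive semidefinite k×k matrix W such that A_i • W = b_i for all i = 1,…,l; (2) there exists a vector ŷ ∈ ℝˡ such that Σ_{i=1}^l ŷ_i A_i is positive semidefinite and bᵀŷ < 0. -/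
open Matrix

namespace Matrix

variable {n : Type*} [Fintype n]

open scoped MatrixOrder in
/-- A positive semidefinite real matrix is a Gram matrix. -/
lemma PosSemidef.exists_eq_transpose_mul_self {M : Matrix n n ℝ} (hM : M.PosSemidef) :
    ∃ B : Matrix n n ℝ, M = Bᵀ * B := by
  classical
  obtain ⟨B, hB⟩ := CStarAlgebra.nonneg_iff_eq_star_mul_self.mp hM.nonneg
  exact ⟨B, by simpa [star_eq_conjTranspose] using hB⟩

/-- The trace pairing of two positive semidefinite matrices is nonnegative. -/
lemma PosSemidef.trace_mul_nonneg {M W : Matrix n n ℝ} (hM : M.PosSemidef) (hW : W.PosSemidef) :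
    0 ≤ (M * W).trace := by
  obtain ⟨C, rfl⟩ := hW.exists_eq_transpose_mul_self
  rw [← Matrix.mul_assoc, trace_mul_comm, ← Matrix.mul_assoc]
  simpa using (hM.mul_mul_conjTranspose_same C).trace_nonneg

lemma trace_mul_vecMulVec_self (M : Matrix n n ℝ) (x : n → ℝ) :
    (M * vecMulVec x x).trace = x ⬝ᵥ (M *ᵥ x) := by
  rw [mul_vecMulVec, trace_vecMulVec, dotProduct_comm]

/-- The entries of a positive semidefinite matrix are bounded by its trace. -/
lemma PosSemidef.abs_apply_le_trace {V : Matrix n n ℝ} (hV : V.PosSemidef) (i j : n) :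
    |V i j| ≤ V.trace := by
  classical
  have hdiag (m : n) : V m m ≤ V.trace :=
    Finset.single_le_sum (f := fun m ↦ V m m) (fun m _ ↦ hV.diag_nonneg) (Finset.mem_univ m)
  have hsymm : V j i = V i j := by simpa using hV.isHermitian.apply i j
  have hadd := hV.dotProduct_mulVec_nonneg (Pi.single i 1 + Pi.single j 1)
  have hsub := hV.dotProduct_mulVec_nonneg (Pi.single i 1 - Pi.single j 1)
  simp [mulVec_add, mulVec_sub, hsymm] at hadd hsub
  have hi := hdiag i
  have hj := hdiag j
  rw [abs_le]
  constructor <;> linarith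

lemma isClosed_setOf_posSemidef : IsClosed {V : Matrix n n ℝ | V.PosSemidef} := by
  simp only [posSemidef_iff_dotProduct_mulVec, Set.ofPred_and, Set.ofPred_forall]
  refine (isClosed_eq (by fun_prop) (by fun_prop)).inter (isClosed_iInter fun x ↦ ?_)
  exact isClosed_le (by fun_prop) (by fun_prop)

lemma isCompact_posSemidef_trace_le (r : ℝ) :
    IsCompact {V : Matrix n n ℝ | V.PosSemidef ∧ V.trace ≤ r} := by
  have hbox : IsCompact (Set.univ.pi fun _ : n ↦ Set.univ.pi fun _ : n ↦ Set.Icc (-r) r) :=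
    isCompact_univ_pi fun _ ↦ isCompact_univ_pi fun _ ↦ isCompact_Icc
  refine hbox.of_isClosed_subset
    (isClosed_setOf_posSemidef.inter (isClosed_le continuous_id.matrix_trace continuous_const)) ?_
  rintro V ⟨hV, hr⟩ i - j -
  exact abs_le.mp ((hV.abs_apply_le_trace i j).trans hr)

/-- A positive definite matrix pairs with the positive semidefinite cone with compact sublevels. -/
lemma PosDef.isCompact_posSemidef_trace_mul_le {P : Matrix n n ℝ} (hP : P.PosDef) (r : ℝ) :
    IsCompact {W : Matrix n n ℝ | W.PosSemidef ∧ (P * W).trace ≤ r} := by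
  classical
  obtain ⟨B, hB⟩ := hP.posSemidef.exists_eq_transpose_mul_self
  have hdet : IsUnit B.det := by
    have h := (isUnit_iff_isUnit_det P).mp hP.isUnit
    rw [hB, det_mul] at h
    exact isUnit_of_mul_isUnit_right h
  have himage := (isCompact_posSemidef_trace_le (n := n) r).image
    (f := fun V ↦ B⁻¹ * V * B⁻¹ᵀ) (by fun_prop)
  convert himage using 1
  ext W
  constructor
  · rintro ⟨hW, hr⟩
    refine ⟨B * W * Bᵀ, ⟨by simpa using hW.mul_mul_conjTranspose_same B, ?_⟩, ?_⟩
    · rwa [trace_mul_comm, ← Matrix.mul_assoc, ← hB]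
    · have hT : Bᵀ * B⁻¹ᵀ = 1 := by
        rw [← transpose_mul, nonsing_inv_mul B hdet, transpose_one]
      calc B⁻¹ * (B * W * Bᵀ) * B⁻¹ᵀ = B⁻¹ * B * W * (Bᵀ * B⁻¹ᵀ) := by
            simp only [Matrix.mul_assoc]
        _ = W := by rw [hT, nonsing_inv_mul B hdet, Matrix.one_mul, Matrix.mul_one]
  · rintro ⟨V, ⟨hV, hr⟩, rfl⟩
    refine ⟨by simpa using hV.mul_mul_conjTranspose_same B⁻¹, ?_⟩
    have hT : B⁻¹ᵀ * Bᵀ = 1 := by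
      rw [← transpose_mul, mul_nonsing_inv B hdet, transpose_one]
    have : (P * (B⁻¹ * V * B⁻¹ᵀ)).trace = V.trace := by
      calc (P * (B⁻¹ * V * B⁻¹ᵀ)).trace = (Bᵀ * (B * B⁻¹ * V * B⁻¹ᵀ)).trace := by
            rw [hB]; simp only [Matrix.mul_assoc]
        _ = V.trace := by
            rw [trace_mul_comm, mul_nonsing_inv B hdet, Matrix.one_mul, Matrix.mul_assoc, hT,
              Matrix.mul_one]
    exact this.trans_le hr

end Matrix

/-- The linear map sending `W` to the vector of trace pairings `trace (A i * W)`. -/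
def tracePairing {n ι : Type*} [Fintype n] (A : ι → Matrix n n ℝ) : Matrix n n ℝ →ₗ[ℝ] ι → ℝ where
  toFun W i := (A i * W).trace
  map_add' V W := by ext i; simp [Matrix.mul_add]
  map_smul' c W := by ext i; simp

section TracePairing

variable {n ι : Type*} [Fintype n] (A : ι → Matrix n n ℝ)

@[simp]
lemma tracePairing_apply (W : Matrix n n ℝ) (i : ι) : tracePairing A W i = (A i * W).trace := rfl

lemma sum_mul_tracePairing [Fintype ι] (y : ι → ℝ) (W : Matrix n n ℝ) :
    ∑ i, y i * tracePairing A W i = ((∑ i, y i • A i) * W).trace := by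
  simp [Matrix.sum_mul, Matrix.trace_sum]

lemma continuous_tracePairing : Continuous (tracePairing A) :=
  continuous_pi fun i ↦ by simp only [tracePairing_apply]; fun_prop

/-- If some combination of the `A i` is positive definite, the image of the positive semidefinite
cone under the trace pairing is closed. -/
lemma isClosed_image_tracePairing [Fintype ι] {y : ι → ℝ} (hy : (∑ i, y i • A i).PosDef) :
    IsClosed (tracePairing A '' {W | W.PosSemidef}) := by
  refine isClosed_of_closure_subset fun b hb ↦ ?_
  set r : ℝ := ∑ i, y i * b i + 1
  have hopen : IsOpen {c : ι → ℝ | ∑ i, y i * c i < r} := isOpen_lt (by fun_prop) (by fun_prop)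
  have hb' := hopen.inter_closure ⟨(lt_add_one _ : ∑ i, y i * b i < r), hb⟩
  have hcompact := (hy.isCompact_posSemidef_trace_mul_le r).image (continuous_tracePairing A)
  have hsub : {c : ι → ℝ | ∑ i, y i * c i < r} ∩ tracePairing A '' {W | W.PosSemidef} ⊆
      tracePairing A '' {W | W.PosSemidef ∧ ((∑ i, y i • A i) * W).trace ≤ r} := by
    rintro _ ⟨hlt, W, hW, rfl⟩
    exact ⟨W, ⟨hW, (sum_mul_tracePairing A y W).symm.trans_le (le_of_lt hlt)⟩, rfl⟩
  obtain ⟨W, hW, rfl⟩ := closure_minimal hsub hcompact.isClosed hb'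
  exact ⟨W, hW.1, rfl⟩

/-- A vector outside the (closed) image of the positive semidefinite cone is separated from it. -/
lemma exists_posSemidef_of_notMem_image_tracePairing [Fintype ι] (hA : ∀ i, (A i).IsSymm)
    (hclosed : IsClosed (tracePairing A '' {W | W.PosSemidef})) {b : ι → ℝ}
    (hb : b ∉ tracePairing A '' {W | W.PosSemidef}) :
    ∃ y : ι → ℝ, (∑ i, y i • A i).PosSemidef ∧ ∑ i, b i * y i < 0 := by
  classical
  have hconvex : Convex ℝ {W : Matrix n n ℝ | W.PosSemidef} :=
    fun V hV W hW s t hs ht _ ↦ (hV.smul hs).add (hW.smul ht)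
  obtain ⟨φ, u, hφb, hφ⟩ := geometric_hahn_banach_point_closed
    (hconvex.linear_image (tracePairing A)) hclosed hb
  have hu : u < 0 := by simpa using hφ 0 ⟨0, PosSemidef.zero, map_zero _⟩
  have hφ_eq (c : ι → ℝ) : φ c = ∑ i, φ (Pi.single i 1) * c i := by
    conv_lhs => rw [pi_eq_sum_univ' c]
    simp [mul_comm]
  have hnonneg {W : Matrix n n ℝ} (hW : W.PosSemidef) : 0 ≤ φ (tracePairing A W) := by
    by_contra! hneg
    have := hφ _ ⟨(u / φ (tracePairing A W)) • W,
      hW.smul (div_nonneg_of_nonpos hu.le hneg.le), rfl⟩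
    simp [div_mul_cancel₀ _ hneg.ne] at this
  refine ⟨fun i ↦ φ (Pi.single i 1), .of_dotProduct_mulVec_nonneg ?_ fun x ↦ ?_, ?_⟩
  · simp [IsHermitian, transpose_sum, fun i ↦ (hA i).eq]
  · have hx := hnonneg (posSemidef_vecMulVec_self_star x)
    rw [hφ_eq, sum_mul_tracePairing] at hx
    simpa only [star_trivial, trace_mul_vecMulVec_self] using hx
  · simpa only [hφ_eq b, mul_comm] using hφb.trans hu

end TracePairing


/-- Semidefinite Farkas Lemma: if some real linear combination of the
real symmetric matrices `A₁,…,A_l` is positive definite, then exactly one of the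
following holds: (1) there is a PSD matrix `W` with `Aᵢ • W = trace(AᵢW) = bᵢ` for
all `i`; (2) there is `ŷ ∈ ℝˡ` with `Σᵢ ŷᵢ Aᵢ ⪰ 0` and `bᵀŷ < 0`. -/
theorem statement2 (k l : ℕ) (A : Fin l → Matrix (Fin k) (Fin k) ℝ)
    (hA : ∀ i, (A i).IsSymm) (b : Fin l → ℝ)
    (hstrict : ∃ y : Fin l → ℝ, (∑ i, y i • A i).PosDef) :
    Xor'
      (∃ W : Matrix (Fin k) (Fin k) ℝ, W.PosSemidef ∧ ∀ i, (A i * W).trace = b i)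
      (∃ yhat : Fin l → ℝ,
        (∑ i, yhat i • A i).PosSemidef ∧ ∑ i, b i * yhat i < 0) := by
  obtain ⟨y, hy⟩ := hstrict
  by_cases hb : b ∈ tracePairing A '' {W | W.PosSemidef}
  · obtain ⟨W, hW, rfl⟩ := hb
    refine Or.inl ⟨⟨W, hW, fun i ↦ rfl⟩, ?_⟩
    rintro ⟨z, hz, hneg⟩
    simp only [mul_comm _ (z _), sum_mul_tracePairing] at hneg
    exact (hz.trace_mul_nonneg hW).not_gt hneg
  · refine Or.inr ⟨exists_posSemidef_of_notMem_image_tracePairing A hA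
      (isClosed_image_tracePairing A hy) hb, ?_⟩
    rintro ⟨W, hW, hWb⟩
    exact hb ⟨W, hW, funext hWb⟩
end

section
/- Let f ∈ ℚ[X₁,…,Xₙ], let e ≥ 0 be an integer, set d = e + ⌈deg(f)/2⌉, and let 𝒯 be any subset of the set of monomials of total degree ≤ e. Then the following are equivalent: (1) f ∉ RSOS(𝒯); (2) there exists a rational sequence ŷ = (ŷ_α) ∈ ℚ^m, indexed by multi-indices α ∈ ℕⁿ with |α| ≤ 2d (so m = C(n+2d, 2d)), such that the moment matrix M_d(ŷ) is positive semidefinite and the localizing moment matrix M_e(fŷ), with rows and columns indexed by the exponents of the monomials in 𝒯, is negative definite. -/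
open MvPolynomial

/-- In finite dimension, the convex hull of a compact set is compact. -/
theorem IsCompact.convexHull_of_finiteDimensional {E : Type*} [NormedAddCommGroup E]
    [NormedSpace ℝ E] [FiniteDimensional ℝ E] {s : Set E} (hs : IsCompact s) :
    IsCompact (convexHull ℝ s) := by
  set N := Module.finrank ℝ E + 1 with hN
  have hK : IsCompact (stdSimplex ℝ (Fin N) ×ˢ Set.univ.pi fun _ : Fin N => s) :=
    (isCompact_stdSimplex ℝ (Fin N)).prod (isCompact_univ_pi fun _ => hs)
  have hcont : Continuous fun q : (Fin N → ℝ) × (Fin N → E) => ∑ i, q.1 i • q.2 i := by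
    fun_prop
  convert hK.image hcont using 1
  apply Set.Subset.antisymm
  · intro x hx
    obtain ⟨ι, _, z, w, hz, hind, hw, hw1, hx⟩ := eq_pos_convex_span_of_mem_convexHull hx
    have hcard : Fintype.card ι ≤ Fintype.card (Fin N) := by
      rw [Fintype.card_fin, hN]
      exact hind.card_le_finrank_succ.trans (by gcongr; exact Submodule.finrank_le _)
    obtain ⟨g⟩ := Function.Embedding.nonempty_of_card_le hcard
    have hne : Nonempty ι := by
      by_contra h
      rw [not_nonempty_iff] at h
      simp at hw1
    obtain ⟨i₀⟩ := hne
    have hsum1 : ∑ i, Function.extend g w 0 i = ∑ i, w i :=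
      (Finset.sum_of_injOn g g.injective.injOn (by simp)
        (fun i _ hi => by
          rw [Function.extend_apply' _ _ _ (by simpa using hi)]; rfl)
        (fun i _ => by rw [g.injective.extend_apply])).symm
    have hsum2 : ∑ i, Function.extend g w 0 i • Function.extend g z (fun _ => z i₀) i
        = ∑ i, w i • z i :=
      (Finset.sum_of_injOn g g.injective.injOn (by simp)
        (fun i _ hi => by
          rw [Function.extend_apply' _ _ _ (by simpa using hi)]; simp)
        (fun i _ => by rw [g.injective.extend_apply, g.injective.extend_apply])).symm
    refine ⟨(Function.extend g w 0, Function.extend g z fun _ => z i₀), ⟨⟨fun i => ?_, ?_⟩, ?_⟩, ?_⟩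
    · by_cases hi : ∃ a, g a = i
      · obtain ⟨a, rfl⟩ := hi
        simpa only [g.injective.extend_apply] using (hw a).le
      · simp only [Function.extend_apply' _ _ _ hi]
        exact le_rfl
    · exact hsum1.trans hw1
    · intro i _
      by_cases hi : ∃ a, g a = i
      · obtain ⟨a, rfl⟩ := hi
        simp only [g.injective.extend_apply]
        exact hz ⟨a, rfl⟩
      · simp only [Function.extend_apply' _ _ _ hi]
        exact hz ⟨i₀, rfl⟩
    · exact hsum2.trans hx
  · rintro _ ⟨⟨w, z⟩, ⟨⟨hw, hw1⟩, hz⟩, rfl⟩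
    exact mem_convexHull_of_exists_fintype w z hw hw1 (fun i => hz i trivial) rfl

namespace MvPolynomial

theorem totalDegree_le_of_sum_sq {n d : ℕ} {ι : Type*} (s : Finset ι)
    (u : ι → MvPolynomial (Fin n) ℝ) (h : (∑ i ∈ s, u i ^ 2).totalDegree ≤ 2 * d) :
    ∀ i ∈ s, (u i).totalDegree ≤ d := by
  intro i hi
  obtain ⟨k, hk, hmax⟩ := s.exists_max_image
    (fun i => MonomialOrder.degLex.toSyn (MonomialOrder.degLex.degree (u i))) ⟨i, hi⟩
  set a := MonomialOrder.degLex.degree (u k) with ha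
  by_cases hk0 : u k = 0
  · have := degLex_totalDegree_monotone (hmax i hi)
    simp only [hk0, totalDegree_zero] at this
    omega
  have hcoeff : coeff (a + a) (∑ i ∈ s, u i ^ 2) = ∑ i ∈ s, coeff a (u i) ^ 2 := by
    rw [coeff_sum]
    refine Finset.sum_congr rfl fun j hj => ?_
    rw [sq, sq, MonomialOrder.coeff_mul_of_add_of_degree_le (hmax j hj) (hmax j hj)]
  have hpos : 0 < ∑ i ∈ s, coeff a (u i) ^ 2 := by
    refine Finset.sum_pos' (fun _ _ => sq_nonneg _) ⟨k, hk, ?_⟩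
    have : coeff a (u k) ≠ 0 := mem_support_iff.mp (MonomialOrder.degree_mem_support hk0)
    positivity
  have hle : (a + a).degree ≤ (∑ i ∈ s, u i ^ 2).totalDegree :=
    le_totalDegree (mem_support_iff.mpr (by rw [hcoeff]; exact hpos.ne'))
  rw [map_add, ha, degree_degLexDegree] at hle
  have := degLex_totalDegree_monotone (hmax i hi)
  omega

theorem eq_zero_of_sum_sq_eq_zero {σ ι : Type*} (s : Finset ι)
    (u : ι → MvPolynomial σ ℝ) (h : ∑ i ∈ s, u i ^ 2 = 0) : ∀ i ∈ s, u i = 0 := by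
  intro i hi
  refine funext fun x => ?_
  have hx := congrArg (eval x) h
  simp only [map_sum, map_pow, map_zero] at hx
  simpa using (Finset.sum_eq_zero_iff_of_nonneg fun j _ => sq_nonneg _).mp hx i hi

/-- The polynomial with coefficient vector `x` along the family of exponents `a`. -/
noncomputable def ofExponents {σ ι : Type*} [Fintype ι] (a : ι → σ →₀ ℕ) (x : ι → ℝ) :
    MvPolynomial σ ℝ :=
  ∑ i, monomial (a i) (x i)

section ofExponents

variable {σ ι : Type*} [Fintype ι] {a : ι → σ →₀ ℕ}

theorem coeff_ofExponents (ha : Function.Injective a) (x : ι → ℝ) (i : ι) :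
    coeff (a i) (ofExponents a x) = x i := by
  classical
  simp [ofExponents, coeff_sum, coeff_monomial, ha.eq_iff]

theorem ofExponents_eq_zero_iff (ha : Function.Injective a) {x : ι → ℝ} :
    ofExponents a x = 0 ↔ x = 0 := by
  refine ⟨fun h => _root_.funext fun i => ?_, fun h => by simp [h, ofExponents]⟩
  simpa [coeff_ofExponents ha] using congrArg (coeff (a i)) h

theorem ofExponents_smul (c : ℝ) (x : ι → ℝ) :
    ofExponents a (c • x) = C c * ofExponents a x := by
  simp [ofExponents, Finset.mul_sum, C_mul_monomial]

theorem support_ofExponents_subset (x : ι → ℝ) {m : σ →₀ ℕ}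
    (hm : m ∈ (ofExponents a x).support) : ∃ i, a i = m := by
  classical
  by_contra! h
  refine mem_support_iff.mp hm ?_
  simp [ofExponents, coeff_sum, coeff_monomial, h]

theorem exists_eq_ofExponents (ha : Function.Injective a) {p : MvPolynomial σ ℝ}
    (hp : ∀ m ∈ p.support, ∃ i, a i = m) : ∃ x, p = ofExponents a x := by
  refine ⟨fun i => coeff (a i) p, ?_⟩
  ext m
  by_cases hm : ∃ i, a i = m
  · obtain ⟨i, rfl⟩ := hm
    rw [coeff_ofExponents ha]
  · rw [notMem_support_iff.mp (mt (hp m) hm),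
      notMem_support_iff.mp (mt (support_ofExponents_subset _) hm)]

theorem map_mul_ofExponents_sq {M : Type*} [AddCommGroup M] [Module ℝ M]
    (L : MvPolynomial σ ℝ →ₗ[ℝ] M) (f : MvPolynomial σ ℝ) (x : ι → ℝ) :
    L (f * ofExponents a x ^ 2) =
      ∑ i, ∑ j, (x i * x j) • L (f * monomial (a i + a j) 1) := by
  have h : f * ofExponents a x ^ 2 =
      ∑ i, ∑ j, (x i * x j) • (f * monomial (a i + a j) 1) := by
    rw [ofExponents, sq, Finset.sum_mul_sum]
    simp only [Finset.mul_sum, monomial_mul, ← mul_smul_comm, smul_monomial, smul_eq_mul, mul_one]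
  simp only [h, map_sum, map_smul]

end ofExponents

/-- The Riesz functional `X ^ α ↦ y α` of a sequence `y`. -/
noncomputable def riesz {σ : Type*} (y : (σ →₀ ℕ) → ℝ) : MvPolynomial σ ℝ →ₗ[ℝ] ℝ :=
  (basisMonomials σ ℝ).constr ℝ y

theorem riesz_monomial {σ : Type*} (y : (σ →₀ ℕ) → ℝ) (m : σ →₀ ℕ) :
    riesz y (monomial m 1) = y m := by
  simpa [riesz] using (basisMonomials σ ℝ).constr_basis ℝ y m

theorem riesz_eq_sum {σ : Type*} (y : (σ →₀ ℕ) → ℝ) (p : MvPolynomial σ ℝ) :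
    riesz y p = ∑ m ∈ p.support, coeff m p * y m := by
  conv_lhs => rw [p.as_sum]
  rw [map_sum]
  refine Finset.sum_congr rfl fun m _ => ?_
  rw [show monomial m (coeff m p) = coeff m p • monomial m (1 : ℝ) by simp [smul_monomial],
    map_smul, riesz_monomial, smul_eq_mul]

theorem riesz_mul_monomial {σ : Type*} (y : (σ →₀ ℕ) → ℝ) (p : MvPolynomial σ ℝ) (m : σ →₀ ℕ) :
    riesz y (p * monomial m 1) = ∑ γ ∈ p.support, coeff γ p * y (γ + m) := by
  conv_lhs => rw [p.as_sum]
  rw [Finset.sum_mul, map_sum]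
  refine Finset.sum_congr rfl fun γ _ => ?_
  rw [monomial_mul, mul_one, show monomial (γ + m) (coeff γ p) =
    coeff γ p • monomial (γ + m) (1 : ℝ) by simp [smul_monomial],
    map_smul, riesz_monomial, smul_eq_mul]

end MvPolynomial

open MvPolynomial Matrix

theorem dotProduct_momentMatrix_mulVec {n t : ℕ} (y : (Fin n →₀ ℕ) → ℝ) (x : Idx n t → ℝ) :
    x ⬝ᵥ (momentMatrix n t y *ᵥ x) = riesz y (ofExponents Subtype.val x ^ 2) := by
  have h := map_mul_ofExponents_sq (a := (Subtype.val : Idx n t → Fin n →₀ ℕ)) (riesz y) 1 x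
  simp only [one_mul, riesz_monomial, smul_eq_mul] at h
  rw [h]
  simp only [dotProduct, mulVec, momentMatrix, Finset.mul_sum]
  exact Finset.sum_congr rfl fun i _ => Finset.sum_congr rfl fun j _ => by ring

theorem dotProduct_locMomentMatrixOn_mulVec {n : ℕ} (𝒯 : Finset (Fin n →₀ ℕ))
    (f : MvPolynomial (Fin n) ℝ) (y : (Fin n →₀ ℕ) → ℝ) (x : 𝒯 → ℝ) :
    x ⬝ᵥ (locMomentMatrixOn n 𝒯 f y *ᵥ x) = riesz y (f * ofExponents Subtype.val x ^ 2) := by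
  have h := map_mul_ofExponents_sq (a := (Subtype.val : 𝒯 → Fin n →₀ ℕ)) (riesz y) f x
  simp only [riesz_mul_monomial, smul_eq_mul, ← add_assoc] at h
  rw [h]
  simp only [dotProduct, mulVec, locMomentMatrixOn, Finset.mul_sum]
  refine Finset.sum_congr rfl fun i _ => Finset.sum_congr rfl fun j _ => ?_
  rw [Finset.sum_mul, Finset.mul_sum]
  exact Finset.sum_congr rfl fun _ _ => by ring

theorem totalDegree_ofExponents_idx_le {n d : ℕ} (x : Idx n d → ℝ) :
    (ofExponents Subtype.val x).totalDegree ≤ d :=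
  Finset.sup_le fun _ hm => by
    obtain ⟨i, rfl⟩ := support_ofExponents_subset x hm
    exact i.2

theorem totalDegree_mul_sq_le {n e k : ℕ} {F v : MvPolynomial (Fin n) ℝ}
    (hF : F.totalDegree ≤ k) (hv : v.totalDegree ≤ e) :
    (F * v ^ 2).totalDegree ≤ 2 * (e + (k + 1) / 2) := by
  have h₁ := totalDegree_mul F (v ^ 2)
  have h₂ := totalDegree_pow v 2
  omega

theorem not_rsos_of_moments {n e k : ℕ} {F : MvPolynomial (Fin n) ℝ}
    {𝒯 : Finset (Fin n →₀ ℕ)} {y : (Fin n →₀ ℕ) → ℝ} (hF : F.totalDegree ≤ k)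
    (h𝒯 : ∀ α ∈ 𝒯, α.degree ≤ e) (hM : (momentMatrix n (e + (k + 1) / 2) y).PosSemidef)
    (hL : (-(locMomentMatrixOn n 𝒯 F y)).PosDef) : ¬ RSOS n 𝒯 F := by
  rintro ⟨l, l', u, v, hv, hne, heq⟩
  have hdeg : (∑ i, u i ^ 2).totalDegree ≤ 2 * (e + (k + 1) / 2) := by
    rw [← heq, Finset.mul_sum]
    exact totalDegree_finsetSum_le fun j _ =>
      totalDegree_mul_sq_le hF (Finset.sup_le fun m hm => h𝒯 m (hv j hm))
  have hu : 0 ≤ riesz y (∑ i, u i ^ 2) := by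
    rw [map_sum]
    refine Finset.sum_nonneg fun i _ => ?_
    have hi := totalDegree_le_of_sum_sq Finset.univ u hdeg i (Finset.mem_univ i)
    obtain ⟨x, hx⟩ := exists_eq_ofExponents
      (a := (Subtype.val : Idx n (e + (k + 1) / 2) → Fin n →₀ ℕ)) Subtype.val_injective
      (p := u i) fun m hm => ⟨⟨m, (le_totalDegree hm).trans hi⟩, rfl⟩
    rw [hx, ← dotProduct_momentMatrix_mulVec]
    simpa using hM.dotProduct_mulVec_nonneg x
  have hvx : ∀ j, ∃ x : 𝒯 → ℝ, v j = ofExponents Subtype.val x := fun j =>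
    exists_eq_ofExponents Subtype.val_injective fun m hm => ⟨⟨m, hv j hm⟩, rfl⟩
  have hneg : ∀ j, v j ≠ 0 → riesz y (F * v j ^ 2) < 0 := by
    intro j hj
    obtain ⟨x, hx⟩ := hvx j
    have hx0 : x ≠ 0 := fun h => hj (by rw [hx, h]; simp [ofExponents])
    rw [hx, ← dotProduct_locMomentMatrixOn_mulVec]
    simpa [neg_mulVec] using hL.dotProduct_mulVec_pos hx0
  obtain ⟨j, hj⟩ : ∃ j, v j ≠ 0 := by
    by_contra! h
    exact hne (by simp [h])
  have hlt : riesz y (F * ∑ j, v j ^ 2) < 0 := by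
    rw [Finset.mul_sum, map_sum]
    refine Finset.sum_neg' (fun i _ => ?_) ⟨j, Finset.mem_univ j, hneg j hj⟩
    by_cases hi : v i = 0
    · simp [hi]
    · exact (hneg i hi).le
  rw [heq] at hlt
  exact absurd hu hlt.not_ge

/-- The polynomial `p² - F v²` attached to coefficient vectors of `p` and `v`. -/
noncomputable def sqSubMulSq {n : ℕ} (d : ℕ) (𝒯 : Finset (Fin n →₀ ℕ))
    (F : MvPolynomial (Fin n) ℝ) (z : (Idx n d → ℝ) × (𝒯 → ℝ)) : MvPolynomial (Fin n) ℝ :=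
  ofExponents Subtype.val z.1 ^ 2 - F * ofExponents Subtype.val z.2 ^ 2

/-- The coefficients of a polynomial in degrees at most `D`. -/
noncomputable def coeffVec (n D : ℕ) : MvPolynomial (Fin n) ℝ →ₗ[ℝ] (Idx n D → ℝ) :=
  LinearMap.pi fun γ => lcoeff ℝ γ.1

theorem eq_zero_of_coeffVec_eq_zero {n D : ℕ} {p : MvPolynomial (Fin n) ℝ}
    (hp : p.totalDegree ≤ D) (h : coeffVec n D p = 0) : p = 0 := by
  ext m
  by_contra hm
  exact hm (congrFun h ⟨m, (le_totalDegree (mem_support_iff.mpr hm)).trans hp⟩)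

theorem continuous_coeffVec_sqSubMulSq {n d D : ℕ} (𝒯 : Finset (Fin n →₀ ℕ))
    (F : MvPolynomial (Fin n) ℝ) :
    Continuous fun z => coeffVec n D (sqSubMulSq d 𝒯 F z) := by
  have h : ∀ z, coeffVec n D (sqSubMulSq d 𝒯 F z) =
      coeffVec n D (1 * ofExponents Subtype.val z.1 ^ 2) -
        coeffVec n D (F * ofExponents Subtype.val z.2 ^ 2) := fun z => by
    rw [sqSubMulSq, map_sub, one_mul]
  simp only [h, map_mul_ofExponents_sq]
  fun_prop

theorem sqSubMulSq_smul {n d : ℕ} (𝒯 : Finset (Fin n →₀ ℕ)) (F : MvPolynomial (Fin n) ℝ)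
    (c : ℝ) (z : (Idx n d → ℝ) × (𝒯 → ℝ)) :
    sqSubMulSq d 𝒯 F (c • z) = c ^ 2 • sqSubMulSq d 𝒯 F z := by
  simp only [sqSubMulSq, Prod.smul_fst, Prod.smul_snd, ofExponents_smul, smul_eq_C_mul, C_pow]
  ring

/-- A convex combination of nontrivial polynomials `p² - F v²` vanishes only if
`F` is a quotient of sums of squares. -/
theorem zero_notMem_convexHull_sqSubMulSq {n e k : ℕ} {𝒯 : Finset (Fin n →₀ ℕ)}
    {F : MvPolynomial (Fin n) ℝ} (hF : F.totalDegree ≤ k) (h𝒯 : ∀ α ∈ 𝒯, α.degree ≤ e)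
    (hR : ¬ RSOS n 𝒯 F) {S : Set ((Idx n (e + (k + 1) / 2) → ℝ) × (𝒯 → ℝ))}
    (hS : (0 : (Idx n (e + (k + 1) / 2) → ℝ) × (𝒯 → ℝ)) ∉ S) :
    (0 : Idx n (2 * (e + (k + 1) / 2)) → ℝ) ∉ convexHull ℝ
      (Set.image (fun z => coeffVec n (2 * (e + (k + 1) / 2)) (sqSubMulSq _ 𝒯 F z)) S) := by
  intro h0
  obtain ⟨ι, _, w, g, hw, hw1, hg, hsum⟩ := mem_convexHull_iff_exists_fintype.mp h0
  choose z hzS hz using hg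
  let p : ι → MvPolynomial (Fin n) ℝ := fun i => ofExponents Subtype.val (√(w i) • (z i).1)
  let v : ι → MvPolynomial (Fin n) ℝ := fun i => ofExponents Subtype.val (√(w i) • (z i).2)
  have hvT : ∀ i, (v i).support ⊆ 𝒯 := fun i m hm => by
    obtain ⟨α, rfl⟩ := support_ofExponents_subset _ hm
    exact α.2
  have hterm : ∀ i, w i • sqSubMulSq _ 𝒯 F (z i) = p i ^ 2 - F * v i ^ 2 := fun i => by
    rw [← Real.sq_sqrt (hw i), ← sqSubMulSq_smul]
    rfl
  have hpoly : ∑ i, (p i ^ 2 - F * v i ^ 2) = 0 := by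
    refine eq_zero_of_coeffVec_eq_zero (D := 2 * (e + (k + 1) / 2)) ?_ ?_
    · refine totalDegree_finsetSum_le fun i _ => (totalDegree_sub _ _).trans (max_le ?_ ?_)
      · exact (totalDegree_pow _ 2).trans (by gcongr; exact totalDegree_ofExponents_idx_le _)
      · exact totalDegree_mul_sq_le hF (Finset.sup_le fun m hm => h𝒯 m (hvT i hm))
    · rw [map_sum, ← hsum]
      refine Finset.sum_congr rfl fun i _ => ?_
      rw [← hterm, map_smul, ← hz i]
  rw [Finset.sum_sub_distrib, ← Finset.mul_sum, sub_eq_zero] at hpoly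
  by_cases hv0 : ∑ i, v i ^ 2 = 0
  · rw [hv0, mul_zero] at hpoly
    have hp := eq_zero_of_sum_sq_eq_zero _ p hpoly
    have hv := eq_zero_of_sum_sq_eq_zero _ v hv0
    obtain ⟨i, hi⟩ : ∃ i, w i ≠ 0 := by
      by_contra! h
      simp [h] at hw1
    have hsq : √(w i) ≠ 0 := (Real.sqrt_pos.mpr ((hw i).lt_of_ne hi.symm)).ne'
    have h₁ := (ofExponents_eq_zero_iff Subtype.val_injective).mp (hp i (Finset.mem_univ i))
    have h₂ := (ofExponents_eq_zero_iff Subtype.val_injective).mp (hv i (Finset.mem_univ i))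
    have hzi : z i = 0 := Prod.ext ((smul_eq_zero_iff_right hsq).mp h₁)
      ((smul_eq_zero_iff_right hsq).mp h₂)
    exact hS (hzi ▸ hzS i)
  · let E := Fintype.equivFin ι
    refine hR ⟨_, _, p ∘ E.symm, v ∘ E.symm, fun j => hvT _, ?_, ?_⟩
    · rwa [show ∑ j, (v ∘ E.symm) j ^ 2 = ∑ i, v i ^ 2 from E.symm.sum_comp fun i => v i ^ 2]
    · rw [show ∑ j, (v ∘ E.symm) j ^ 2 = ∑ i, v i ^ 2 from E.symm.sum_comp fun i => v i ^ 2,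
        show ∑ j, (p ∘ E.symm) j ^ 2 = ∑ i, p i ^ 2 from E.symm.sum_comp fun i => p i ^ 2, hpoly]

/-- If zero is not a convex combination of points of a compact set `K`, some rational
linear form is positive on `K`. -/
theorem exists_rat_pos_on_compact {ι : Type*} [Fintype ι] {K : Set (ι → ℝ)} (hK : IsCompact K)
    (h0 : (0 : ι → ℝ) ∉ convexHull ℝ K) :
    ∃ w : ι → ℚ, ∀ x ∈ K, 0 < (fun i => (w i : ℝ)) ⬝ᵥ x := by
  classical
  obtain ⟨φ, c, hc0, hc⟩ := geometric_hahn_banach_point_closed (convex_convexHull ℝ K)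
    hK.convexHull_of_finiteDimensional.isClosed h0
  rw [map_zero] at hc0
  have hφ : ∀ x, φ x = (fun i => φ (Pi.single i 1)) ⬝ᵥ x := fun x => by
    conv_lhs => rw [pi_eq_sum_univ' x]
    simp [dotProduct, mul_comm]
  have hev : ∀ᶠ w in nhds (fun i => φ (Pi.single i 1)), ∀ x ∈ K, 0 < w ⬝ᵥ x := by
    refine hK.eventually_forall_of_forall_eventually fun x hx => ?_
    have hcont : Continuous fun q : (ι → ℝ) × (ι → ℝ) => q.1 ⬝ᵥ q.2 := by fun_prop
    refine hcont.continuousAt.eventually (lt_mem_nhds ?_)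
    exact (hc0.trans (hc x (subset_convexHull ℝ K hx))).trans_eq (hφ x)
  have hdense : DenseRange (Pi.map fun (_ : ι) (q : ℚ) => (q : ℝ)) :=
    DenseRange.piMap fun _ => Rat.denseRange_cast
  obtain ⟨_, ⟨w, rfl⟩, hw⟩ := hdense.inter_nhds_nonempty hev
  exact ⟨w, hw⟩

theorem riesz_eq_dotProduct {n D : ℕ} {y : (Fin n →₀ ℕ) → ℝ} (hy : ∀ α, D < α.degree → y α = 0)
    (p : MvPolynomial (Fin n) ℝ) :
    riesz y p = (fun γ : Idx n D => y γ.1) ⬝ᵥ coeffVec n D p := by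
  classical
  rw [riesz_eq_sum, dotProduct]
  have h₁ : ∑ γ : Idx n D, y γ.1 * coeffVec n D p γ =
      ∑ m ∈ (Finset.univ : Finset (Idx n D)).map (Function.Embedding.subtype _), coeff m p * y m := by
    rw [Finset.sum_map]
    exact Finset.sum_congr rfl fun _ _ => mul_comm _ _
  rw [h₁]
  refine Finset.sum_congr_of_eq_on_inter (fun m _ hm => ?_) (fun m _ hm => ?_) fun _ _ _ => rfl
  · rw [hy m, mul_zero]
    by_contra hlt
    exact hm (by simpa using hlt)
  · rw [notMem_support_iff.mp hm, zero_mul]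

theorem totalDegree_map_algebraMap_le {n : ℕ} (f : MvPolynomial (Fin n) ℚ) :
    (f.map (algebraMap ℚ ℝ)).totalDegree ≤ f.totalDegree :=
  Finset.sup_mono (support_map_subset _ _)

theorem exists_rat_moments (n e : ℕ) (f : MvPolynomial (Fin n) ℚ)
    (𝒯 : Finset (Fin n →₀ ℕ)) (h𝒯 : ∀ α ∈ 𝒯, α.degree ≤ e)
    (hR : ¬ RSOS n 𝒯 (f.map (algebraMap ℚ ℝ))) :
    ∃ yhat : (Fin n →₀ ℕ) → ℚ,
      (momentMatrix n (e + (f.totalDegree + 1) / 2)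
        (fun α => (yhat α : ℝ))).PosSemidef ∧
      (-(locMomentMatrixOn n 𝒯 (f.map (algebraMap ℚ ℝ))
        (fun α => (yhat α : ℝ)))).PosDef := by
  classical
  set F := f.map (algebraMap ℚ ℝ) with hF
  set d := e + (f.totalDegree + 1) / 2 with hd
  obtain ⟨w, hw⟩ := exists_rat_pos_on_compact
    ((isCompact_sphere (0 : (Idx n d → ℝ) × (𝒯 → ℝ)) 1).image
      (continuous_coeffVec_sqSubMulSq (D := 2 * d) 𝒯 F))
    (zero_notMem_convexHull_sqSubMulSq (totalDegree_map_algebraMap_le f) h𝒯 hR (by simp))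
  let yhat : (Fin n →₀ ℕ) → ℚ := fun α => if h : α.degree ≤ 2 * d then w ⟨α, h⟩ else 0
  have hriesz : ∀ p, riesz (fun α => (yhat α : ℝ)) p =
      (fun γ => (w γ : ℝ)) ⬝ᵥ coeffVec n (2 * d) p := fun p => by
    rw [riesz_eq_dotProduct (D := 2 * d) (fun α hα => by simp [yhat, hα.not_ge])]
    congr 1
    funext γ
    simp [yhat, γ.2]
  have hpos : ∀ z : (Idx n d → ℝ) × (𝒯 → ℝ), z ≠ 0 →
      0 < riesz (fun α => (yhat α : ℝ)) (sqSubMulSq d 𝒯 F z) := by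
    intro z hz
    have hnorm : ‖z‖ ≠ 0 := norm_ne_zero_iff.mpr hz
    have hunit := hw _ ⟨‖z‖⁻¹ • z, by simp [norm_smul, hnorm], rfl⟩
    rw [← hriesz, sqSubMulSq_smul, map_smul, smul_eq_mul] at hunit
    exact pos_of_mul_pos_right hunit (sq_nonneg _)
  refine ⟨yhat, .of_dotProduct_mulVec_nonneg ?_ fun x => ?_,
    .of_dotProduct_mulVec_pos ?_ fun x hx => ?_⟩
  · ext α β
    simp [momentMatrix, add_comm]
  · rw [star_trivial, dotProduct_momentMatrix_mulVec]
    by_cases hx : x = 0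
    · simp [hx, ofExponents]
    · have := hpos (x, 0) (by simpa using hx)
      simpa [sqSubMulSq, ofExponents] using this.le
  · ext α β
    simp [locMomentMatrixOn, add_right_comm]
  · rw [star_trivial, neg_mulVec, dotProduct_neg, dotProduct_locMomentMatrixOn_mulVec]
    have := hpos (0, x) (by simpa using hx)
    simpa [sqSubMulSq, ofExponents] using this

/-- for `f ∈ ℚ[X]` and `d = e + ⌈deg f / 2⌉`, `f ∉ RSOS(𝒯)` iff
there is a rational sequence `ŷ` (indexed by multi-indices of degree `≤ 2d`; here
defined on all multi-indices) with `M_d(ŷ) ⪰ 0` and `M_e(fŷ)` (indexed by the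
exponents of the monomials in `𝒯`) negative definite. -/
theorem statement3 (n e : ℕ) (f : MvPolynomial (Fin n) ℚ)
    (𝒯 : Finset (Fin n →₀ ℕ)) (h𝒯 : ∀ α ∈ 𝒯, α.degree ≤ e) :
    ¬ RSOS n 𝒯 (f.map (algebraMap ℚ ℝ)) ↔
      ∃ yhat : (Fin n →₀ ℕ) → ℚ,
        (momentMatrix n (e + (f.totalDegree + 1) / 2)
          (fun α => (yhat α : ℝ))).PosSemidef ∧
        (-(locMomentMatrixOn n 𝒯 (f.map (algebraMap ℚ ℝ))
          (fun α => (yhat α : ℝ)))).PosDef := by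
  refine ⟨exists_rat_moments n e f 𝒯 h𝒯, ?_⟩
  rintro ⟨y, hM, hL⟩
  exact not_rsos_of_moments (totalDegree_map_algebraMap_le f) h𝒯 hM hL
end

section
/- (Reznick's Newton polytope theorem.) For a real polynomial p ∈ ℝ[X₁,…,Xₙ], let C(p) ⊆ ℝⁿ denote the convex hull of the exponent vectors of the monomials appearing in p with nonzero coefficient. Then: (i) C(p²) = 2·C(p) (the image of C(p) under scaling by 2); (ii) if f and g are polynomials that are nonnegative on all of ℝⁿ, then C(f) ⊆ C(f+g); (iii) if f = Σ_j g_j² is a sum of squares of polynomials g_j, then C(g_j) ⊆ ½·C(f) for every j. -/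
open MvPolynomial Pointwise

/-- The Newton polytope `C(p)` of a polynomial `p`: the convex hull in `ℝⁿ` of the
exponent vectors of the monomials appearing in `p` with nonzero coefficient. -/
noncomputable def newtonPolytope (n : ℕ) (p : MvPolynomial (Fin n) ℝ) :
    Set (Fin n → ℝ) :=
  convexHull ℝ ((fun α : Fin n →₀ ℕ => fun i => (α i : ℝ)) '' ↑p.support)

open Filter Asymptotics Topology

section NewtonPolytope

variable {n : ℕ}

/-- The curve `t ↦ (xᵢ exp (t wᵢ))ᵢ`, where `w` is the weight vector of the
linear functional `φ`. -/
noncomputable def weightedCurve (φ : (Fin n → ℝ) →L[ℝ] ℝ) (x : Fin n → ℝ) (t : ℝ) : Fin n → ℝ :=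
  fun i => x i * Real.exp (t * φ (Pi.single i 1))

/-- Along a weighted curve, the monomial with exponent `α` grows like `exp (t φ(α))`. -/
lemma eval_weightedCurve (φ : (Fin n → ℝ) →L[ℝ] ℝ) (x : Fin n → ℝ) (t : ℝ)
    (p : MvPolynomial (Fin n) ℝ) :
    eval (weightedCurve φ x t) p =
      ∑ α ∈ p.support, coeff α p * (∏ i, x i ^ α i) *
        Real.exp (t * φ (fun i => (α i : ℝ))) := by
  rw [eval_eq']
  refine Finset.sum_congr rfl fun α _ => ?_
  have hφ : φ (fun i => (α i : ℝ)) = ∑ i, (α i : ℝ) * φ (Pi.single i 1) := by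
    conv_lhs => rw [pi_eq_sum_univ' (fun i => (α i : ℝ))]
    simp [map_sum, Pi.single]
  simp only [weightedCurve, mul_pow, Finset.prod_mul_distrib, hφ, Finset.mul_sum, Real.exp_sum,
    mul_assoc, ← Real.exp_nat_mul, mul_left_comm t]

lemma tendsto_exp_mul_add_neg_mul {a b : ℝ} (hab : a < b) :
    Tendsto (fun t : ℝ => Real.exp (t * a + -(t * b))) atTop (𝓝 0) := by
  simp only [← mul_neg, ← mul_add, ← sub_eq_add_neg]
  exact Real.tendsto_exp_atBot.comp (tendsto_id.atTop_mul_const_of_neg (sub_neg.2 hab))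

/-- A linear functional is bounded by `c` on the exponents of `p` exactly when `p` grows at most
like `exp (c t)` along all curves weighted by the functional. -/
lemma forall_support_le_iff_isBigO (φ : (Fin n → ℝ) →L[ℝ] ℝ) (c : ℝ)
    (p : MvPolynomial (Fin n) ℝ) :
    (∀ α ∈ p.support, φ (fun i => (α i : ℝ)) ≤ c) ↔
      ∀ x, (fun t => eval (weightedCurve φ x t) p) =O[atTop] fun t => Real.exp (t * c) := by
  simp only [eval_weightedCurve]
  constructor
  · refine fun h x => IsBigO.fun_sum fun α hα => IsBigO.const_mul_left ?_ _
    refine IsBigO.of_bound 1 ?_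
    filter_upwards [eventually_ge_atTop 0] with t ht
    simpa using mul_le_mul_of_nonneg_left (h α hα) ht
  · intro h
    by_contra! ⟨β, hβ, hcβ⟩
    obtain ⟨γ, hγ, hmax⟩ := p.support.exists_max_image
      (fun α => φ (fun i => (α i : ℝ))) ⟨β, hβ⟩
    set m := φ (fun i => (γ i : ℝ)) with hm
    have hcm : c < m := hcβ.trans_le (hmax β hβ)
    let q : MvPolynomial (Fin n) ℝ :=
      ∑ α ∈ p.support, if φ (fun i => (α i : ℝ)) = m then monomial α (coeff α p) else 0
    have hq : q = 0 := by
      refine MvPolynomial.funext fun x => ?_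
      have hlim : Tendsto (fun t => (∑ α ∈ p.support, coeff α p * (∏ i, x i ^ α i) *
          Real.exp (t * φ (fun i => (α i : ℝ)))) * Real.exp (-(t * m))) atTop (𝓝 (eval x q)) := by
        simp only [q, map_sum, Finset.sum_mul]
        refine tendsto_finsetSum _ fun α hα => ?_
        simp only [mul_assoc, ← Real.exp_add]
        split_ifs with heq
        · simp [heq, eval_monomial, Finsupp.prod_fintype]
        · have hlt : φ (fun i => (α i : ℝ)) < m := (hmax α hα).lt_of_ne heq
          simpa using ((tendsto_exp_mul_add_neg_mul hlt).const_mul (∏ i, x i ^ α i)).const_mul (coeff α p)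
      have hzero := ((h x).mul (isBigO_refl (fun t => Real.exp (-(t * m))) atTop)).trans_tendsto
        (by simpa only [← Real.exp_add] using tendsto_exp_mul_add_neg_mul hcm)
      simpa using tendsto_nhds_unique hlim hzero
    have hcoeff : coeff γ q = coeff γ p := by
      simp only [q, coeff_sum]
      rw [Finset.sum_eq_single γ (fun α _ hα => by split_ifs <;> simp [coeff_monomial, hα])
        (fun hnot => absurd hγ hnot)]
      simp [hm]
    rw [hq, coeff_zero] at hcoeff
    exact mem_support_iff.1 hγ hcoeff.symm

lemma mem_newtonPolytope_iff {p : MvPolynomial (Fin n) ℝ} {x : Fin n → ℝ} :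
    x ∈ newtonPolytope n p ↔ ∀ (φ : (Fin n → ℝ) →L[ℝ] ℝ) (c : ℝ),
      (∀ α ∈ p.support, φ (fun i => (α i : ℝ)) ≤ c) → φ x ≤ c := by
  constructor
  · intro hx φ c h
    have hsub : newtonPolytope n p ⊆ {y | φ y ≤ c} := by
      refine convexHull_min ?_ (convex_halfSpace_le φ.toLinearMap.isLinear c)
      rintro _ ⟨α, hα, rfl⟩
      exact h α hα
    exact hsub hx
  · intro h
    by_contra hx
    obtain ⟨φ, u, hlt, hux⟩ := geometric_hahn_banach_closed_point
      (convex_convexHull ℝ _)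
      ((p.support.finite_toSet.image fun α : Fin n →₀ ℕ =>
        fun i => (α i : ℝ)).isClosed_convexHull (𝕜 := ℝ)) hx
    exact hux.not_ge (h φ u fun α hα =>
      (hlt _ (subset_convexHull ℝ _ (Set.mem_image_of_mem _ hα))).le)

lemma mem_newtonPolytope_iff_isBigO {p : MvPolynomial (Fin n) ℝ} {x : Fin n → ℝ} :
    x ∈ newtonPolytope n p ↔ ∀ (φ : (Fin n → ℝ) →L[ℝ] ℝ) (c : ℝ),
      (∀ y, (fun t => eval (weightedCurve φ y t) p) =O[atTop] fun t => Real.exp (t * c)) →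
        φ x ≤ c := by
  simp only [mem_newtonPolytope_iff, forall_support_le_iff_isBigO]

lemma newtonPolytope_mono {f h : MvPolynomial (Fin n) ℝ} (hf : ∀ x, 0 ≤ eval x f)
    (hfh : ∀ x, eval x f ≤ eval x h) : newtonPolytope n f ⊆ newtonPolytope n h := by
  intro x hx
  rw [mem_newtonPolytope_iff_isBigO] at hx ⊢
  refine fun φ c hc => hx φ c fun y => (IsBigO.of_bound 1 (.of_forall fun t => ?_)).trans (hc y)
  rw [one_mul, Real.norm_of_nonneg (hf _), Real.norm_of_nonneg ((hf _).trans (hfh _))]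
  exact hfh _

lemma newtonPolytope_sq (p : MvPolynomial (Fin n) ℝ) :
    newtonPolytope n (p ^ 2) = (2 : ℝ) • newtonPolytope n p := by
  have hiff (φ : (Fin n → ℝ) →L[ℝ] ℝ) (c : ℝ) (y : Fin n → ℝ) :
      ((fun t => eval (weightedCurve φ y t) (p ^ 2)) =O[atTop] fun t => Real.exp (t * (2 * c))) ↔
        (fun t => eval (weightedCurve φ y t) p) =O[atTop] fun t => Real.exp (t * c) := by
    have hexp : (fun t => Real.exp (t * (2 * c))) = (fun t => Real.exp (t * c)) ^ 2 := by
      ext t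
      rw [Pi.pow_apply, ← Real.exp_nat_mul]
      congr 1
      push_cast
      ring
    simp only [map_pow, hexp]
    exact ⟨fun h => IsBigO.of_pow two_ne_zero h, fun h => h.pow 2⟩
  ext x
  rw [Set.mem_smul_set_iff_inv_smul_mem₀ two_ne_zero, mem_newtonPolytope_iff_isBigO,
    mem_newtonPolytope_iff_isBigO]
  refine forall_congr' fun φ => (Equiv.mulLeft₀ (2 : ℝ) two_ne_zero).forall_congr_right.symm.trans
    (forall_congr' fun c => ?_)
  simp only [Equiv.mulLeft₀_apply, hiff, map_smul, smul_eq_mul, inv_mul_le_iff₀ (zero_lt_two' ℝ)]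

end NewtonPolytope

/-- Reznick's Newton polytope theorem:
(i) `C(p²) = 2·C(p)`;
(ii) if `f` and `g` are nonnegative on `ℝⁿ` then `C(f) ⊆ C(f+g)`;
(iii) if `f = Σⱼ gⱼ²` then `C(gⱼ) ⊆ ½·C(f)` for every `j`. -/
theorem statement6 (n : ℕ) :
    (∀ p : MvPolynomial (Fin n) ℝ,
      newtonPolytope n (p ^ 2) = (2 : ℝ) • newtonPolytope n p) ∧
    (∀ f g : MvPolynomial (Fin n) ℝ,
      (∀ x : Fin n → ℝ, 0 ≤ eval x f) → (∀ x : Fin n → ℝ, 0 ≤ eval x g) →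
      newtonPolytope n f ⊆ newtonPolytope n (f + g)) ∧
    (∀ (l : ℕ) (g : Fin l → MvPolynomial (Fin n) ℝ) (f : MvPolynomial (Fin n) ℝ),
      f = ∑ j, g j ^ 2 →
      ∀ j, newtonPolytope n (g j) ⊆ (2⁻¹ : ℝ) • newtonPolytope n f) := by
  refine ⟨newtonPolytope_sq, fun f g hf hg => newtonPolytope_mono hf fun x => ?_, ?_⟩
  · simpa using hg x
  · rintro l g f rfl j
    rw [Set.subset_smul_set_iff₀ (by norm_num), inv_inv, ← newtonPolytope_sq]
    refine newtonPolytope_mono (fun x => by simpa using sq_nonneg _) fun x => ?_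
    simp only [map_sum, map_pow]
    exact Finset.single_le_sum (f := fun k => eval x (g k) ^ 2) (fun k _ => sq_nonneg _)
      (Finset.mem_univ j)
end

section
/- Let f, g ∈ ℝ[X₁,…,Xₙ] with g nonnegative on all of ℝⁿ and g ≠ 0, let e ≥ 0 be an integer, and set d = e + ⌈(deg(f) − deg(g))/2⌉. Then there exist a sequence ỹ indexed by multi-indices of degree ≤ 2d + deg(g) and a real number s̃ such that the localizing moment matrix M_d(gỹ) is positive definite and the matrix M_e((−f)ỹ) + s̃·I is positive definite. -/
open MvPolynomial

/-- `d = e + ⌈(deg f − deg g)/2⌉` (clamped at `e` when `deg f < deg g`). -/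
def fracDeg (n e : ℕ) (f g : MvPolynomial (Fin n) ℝ) : ℕ :=
  e + ((f.totalDegree : ℤ) - (g.totalDegree : ℤ) + 1).toNat / 2

/-- The moment sequence of the counting measure on a finite set of points. -/
noncomputable def pointMoments {n : ℕ} (S : Finset (Fin n → ℝ)) (α : Fin n →₀ ℕ) : ℝ :=
  ∑ x ∈ S, ∏ i, x i ^ α i

/-- The polynomial of degree at most `t` with coefficient vector `v`. -/
noncomputable def polyOfCoeffs {n t : ℕ} (v : Idx n t → ℝ) : MvPolynomial (Fin n) ℝ :=
  ∑ α, monomial α.1 (v α)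

theorem coeff_polyOfCoeffs {n t : ℕ} (v : Idx n t → ℝ) (α : Idx n t) :
    (polyOfCoeffs v).coeff α.1 = v α := by
  classical
  simp [polyOfCoeffs, coeff_sum, coeff_monomial, Subtype.coe_inj]

theorem totalDegree_polyOfCoeffs_le {n t : ℕ} (v : Idx n t → ℝ) :
    (polyOfCoeffs v).totalDegree ≤ t := by
  refine totalDegree_finsetSum_le fun α _ => ?_
  exact (totalDegree_monomial_le _ _).trans α.2

theorem eval_polyOfCoeffs {n t : ℕ} (v : Idx n t → ℝ) (x : Fin n → ℝ) :
    eval x (polyOfCoeffs v) = ∑ α, v α * ∏ i, x i ^ α.1 i := by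
  simp [polyOfCoeffs, eval_monomial, Finsupp.prod_fintype]

theorem locMomentMatrix_pointMoments_apply {n t : ℕ} (S : Finset (Fin n → ℝ))
    (q : MvPolynomial (Fin n) ℝ) (α β : Idx n t) :
    locMomentMatrix n t q (pointMoments S) α β =
      ∑ x ∈ S, eval x q * (∏ i, x i ^ α.1 i) * ∏ i, x i ^ β.1 i := by
  simp only [locMomentMatrix, pointMoments, Finset.mul_sum, eval_eq', Finset.sum_mul]
  rw [Finset.sum_comm]
  simp only [Finsupp.add_apply, pow_add, Finset.prod_mul_distrib, mul_assoc]

theorem isHermitian_locMomentMatrix (n t : ℕ) (q : MvPolynomial (Fin n) ℝ)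
    (y : (Fin n →₀ ℕ) → ℝ) : (locMomentMatrix n t q y).IsHermitian := by
  ext α β
  simp [locMomentMatrix, add_right_comm]

theorem dotProduct_locMomentMatrix_pointMoments {n t : ℕ} (S : Finset (Fin n → ℝ))
    (q : MvPolynomial (Fin n) ℝ) (v : Idx n t → ℝ) :
    v ⬝ᵥ (locMomentMatrix n t q (pointMoments S)).mulVec v =
      ∑ x ∈ S, eval x q * eval x (polyOfCoeffs v) ^ 2 := by
  simp only [dotProduct, Matrix.mulVec, locMomentMatrix_pointMoments_apply, eval_polyOfCoeffs,
    sq, Finset.sum_mul, Finset.mul_sum]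
  rw [Finset.sum_comm_cycle]
  exact Finset.sum_congr rfl fun x _ => Finset.sum_congr rfl fun α _ =>
    Finset.sum_congr rfl fun β _ => by ring

/-- The localizing moment matrix of a nonzero nonnegative polynomial is positive definite for the
counting measure on a sufficiently large grid. -/
theorem exists_posDef_locMomentMatrix (n t : ℕ) (g : MvPolynomial (Fin n) ℝ) (hg0 : g ≠ 0)
    (hg : ∀ x : Fin n → ℝ, 0 ≤ eval x g) :
    ∃ y : (Fin n →₀ ℕ) → ℝ, (locMomentMatrix n t g y).PosDef := by
  classical
  obtain ⟨T, hT⟩ := Infinite.exists_subset_card_eq ℝ (g.totalDegree + t + 1)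
  refine ⟨pointMoments (Fintype.piFinset fun _ => T),
    .of_dotProduct_mulVec_pos (isHermitian_locMomentMatrix ..) fun v hv => ?_⟩
  rw [star_trivial, dotProduct_locMomentMatrix_pointMoments]
  have hnonneg (x : Fin n → ℝ) : 0 ≤ eval x g * eval x (polyOfCoeffs v) ^ 2 :=
    mul_nonneg (hg x) (sq_nonneg _)
  refine (Finset.sum_nonneg fun x _ => hnonneg x).lt_of_ne' fun hsum => ?_
  rw [Finset.sum_eq_zero_iff_of_nonneg fun x _ => hnonneg x] at hsum
  have hzero : g * polyOfCoeffs v = 0 := by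
    refine eq_zero_of_eval_zero_at_prod_finset _ (fun _ => T) (fun i => ?_) fun x hx => ?_
    · have h₁ := degreeOf_le_totalDegree (g * polyOfCoeffs v) i
      have h₂ := totalDegree_mul g (polyOfCoeffs v)
      have h₃ := totalDegree_polyOfCoeffs_le v
      omega
    · simpa using hsum x (Fintype.mem_piFinset.2 hx)
  have hp := (mul_eq_zero.1 hzero).resolve_left hg0
  exact hv (funext fun α => by simp [← coeff_polyOfCoeffs v α, hp])

/-- A real symmetric matrix becomes positive definite after adding a large multiple of the
identity. -/
theorem Matrix.IsHermitian.exists_posDef_add_smul_one {ι : Type*} [Fintype ι] [DecidableEq ι]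
    {A : Matrix ι ι ℝ} (hA : A.IsHermitian) :
    ∃ s : ℝ, (A + s • (1 : Matrix ι ι ℝ)).PosDef := by
  refine ⟨∑ i, ∑ j, |A i j| + 1, .of_dotProduct_mulVec_pos
    (hA.add (by simp [Matrix.IsHermitian])) fun v hv => ?_⟩
  have hpos : 0 < v ⬝ᵥ v := by simpa using Matrix.dotProduct_star_self_pos_iff.2 hv
  have hsq (i : ι) : v i ^ 2 ≤ v ⬝ᵥ v := by
    simpa [dotProduct, sq] using
      Finset.single_le_sum (fun j _ => mul_self_nonneg (v j)) (Finset.mem_univ i)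
  have hentry (i j : ι) : -(|A i j| * (v ⬝ᵥ v)) ≤ v i * (A i j * v j) := by
    have hv' : |v i * v j| ≤ v ⬝ᵥ v :=
      abs_le.2 ⟨by nlinarith [hsq i, hsq j, sq_nonneg (v i + v j)],
        by nlinarith [hsq i, hsq j, sq_nonneg (v i - v j)]⟩
    calc -(|A i j| * (v ⬝ᵥ v)) ≤ -|A i j * (v i * v j)| := by
          rw [abs_mul]; gcongr
      _ ≤ A i j * (v i * v j) := neg_abs_le _
      _ = v i * (A i j * v j) := by ring
  have hbound : -((∑ i, ∑ j, |A i j|) * (v ⬝ᵥ v)) ≤ v ⬝ᵥ A.mulVec v := by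
    rw [dotProduct.eq_def v (A.mulVec v)]
    simp only [Matrix.mulVec, dotProduct.eq_def (A _), Finset.mul_sum, Finset.sum_mul,
      ← Finset.sum_neg_distrib]
    exact Finset.sum_le_sum fun i _ => Finset.sum_le_sum fun j _ => hentry i j
  rw [star_trivial, Matrix.add_mulVec, Matrix.smul_mulVec, Matrix.one_mulVec, dotProduct_add,
    dotProduct_smul, smul_eq_mul]
  linarith

/-- for `g` nonnegative on `ℝⁿ` and `g ≠ 0`, with
`d = e + ⌈(deg f − deg g)/2⌉`, there exist a sequence `ỹ` (indexed by multi-indices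
of degree `≤ 2d + deg g`; here defined on all multi-indices) and `s̃ ∈ ℝ` with
`M_d(gỹ)` positive definite and `M_e((−f)ỹ) + s̃·I` positive definite. -/
theorem statement9 (n e : ℕ) (f g : MvPolynomial (Fin n) ℝ) (hg0 : g ≠ 0)
    (hg : ∀ x : Fin n → ℝ, 0 ≤ eval x g) :
    ∃ (y : (Fin n →₀ ℕ) → ℝ) (s : ℝ),
      (locMomentMatrix n (fracDeg n e f g) g y).PosDef ∧
      (locMomentMatrix n e (-f) y + s • (1 : Matrix (Idx n e) (Idx n e) ℝ)).PosDef := by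
  obtain ⟨y, hy⟩ := exists_posDef_locMomentMatrix n (fracDeg n e f g) g hg0 hg
  obtain ⟨s, hs⟩ := (isHermitian_locMomentMatrix n e (-f) y).exists_posDef_add_smul_one
  exact ⟨y, s, hy, hs⟩
end

section
/- Let f, g ∈ ℝ[X₁,…,Xₙ] with g ≠ 0 and gcd(f, g) = 1. If neither f nor −f is a sum of squares of polynomials, then there do not exist polynomials u₁,…,u_l, v₁,…,v_{l′} ∈ ℝ[X₁,…,Xₙ] with deg(v_j) ≤ deg(g)/2 for every j and Σ_j v_j² ≠ 0 such that f · Σ_j v_j² = g · Σ_i u_i². -/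
open MvPolynomial

/-- Sums of squares are closed under scaling by nonnegative reals. -/
theorem IsSOS.C_mul {n : ℕ} {p : MvPolynomial (Fin n) ℝ} (hp : IsSOS n p) {a : ℝ}
    (ha : 0 ≤ a) : IsSOS n (C a * p) := by
  obtain ⟨l, u, rfl⟩ := hp
  refine ⟨l, fun i => C √a * u i, ?_⟩
  simp_rw [mul_pow, ← C_pow, Real.sq_sqrt ha, Finset.mul_sum]

/-- If a nonzero scalar multiple of `f` is a sum of squares, then so is `f` or `-f`. -/
theorem IsSOS.or_neg_of_C_mul {n : ℕ} {f : MvPolynomial (Fin n) ℝ} {c : ℝ} (hc : c ≠ 0)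
    (h : IsSOS n (C c * f)) : IsSOS n f ∨ IsSOS n (-f) := by
  have key : C c⁻¹ * (C c * f) = f := by
    rw [← mul_assoc, ← MvPolynomial.C_mul, inv_mul_cancel₀ hc, C_1, one_mul]
  rcases hc.lt_or_gt with hneg | hpos
  · right
    have := h.C_mul (a := -c⁻¹) (neg_nonneg.2 (inv_nonpos.2 hneg.le))
    rwa [C_neg, neg_mul, key] at this
  · left
    have := h.C_mul (inv_nonneg.2 hpos.le)
    rwa [key] at this

/-- A nonzero multiple of `g` of degree at most that of `g` is a scalar multiple of `g`. -/
theorem MvPolynomial.exists_eq_mul_C_of_dvd {σ R : Type*} [CommRing R] [IsDomain R]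
    {g p : MvPolynomial σ R} (hp : p ≠ 0) (hdvd : g ∣ p)
    (hdeg : p.totalDegree ≤ g.totalDegree) : ∃ c : R, c ≠ 0 ∧ p = g * C c := by
  obtain ⟨w, rfl⟩ := hdvd
  rw [totalDegree_mul_of_isDomain (left_ne_zero_of_mul hp) (right_ne_zero_of_mul hp)] at hdeg
  have hw : w = C (coeff 0 w) := totalDegree_eq_zero_iff_eq_C.1 (by lia)
  refine ⟨coeff 0 w, fun h => right_ne_zero_of_mul hp ?_, congrArg (g * ·) hw⟩
  rw [hw, h, C_0]

/-- if `g ≠ 0`, `gcd(f,g) = 1` (i.e. every common divisor of `f` and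
`g` is a unit) and neither `f` nor `−f` is a sum of squares, then there are no
polynomials `u₁,…,u_l, v₁,…,v_{l'}` with `deg(vⱼ) ≤ deg(g)/2` (i.e.
`2·deg(vⱼ) ≤ deg g`) for all `j` and `Σⱼ vⱼ² ≠ 0` such that
`f · Σⱼ vⱼ² = g · Σᵢ uᵢ²`. -/
theorem statement12 (n : ℕ) (f g : MvPolynomial (Fin n) ℝ) (hg : g ≠ 0)
    (hgcd : IsRelPrime f g) (h1 : ¬ IsSOS n f) (h2 : ¬ IsSOS n (-f)) :
    ¬ ∃ (l l' : ℕ) (u : Fin l → MvPolynomial (Fin n) ℝ)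
        (v : Fin l' → MvPolynomial (Fin n) ℝ),
        (∀ j, 2 * (v j).totalDegree ≤ g.totalDegree) ∧
        (∑ j, v j ^ 2) ≠ 0 ∧
        f * (∑ j, v j ^ 2) = g * ∑ i, u i ^ 2 := by
  rintro ⟨l, l', u, v, hdeg, hV, heq⟩
  have hdvd : g ∣ ∑ j, v j ^ 2 :=
    hgcd.symm.dvd_of_dvd_mul_left (Dvd.intro _ heq.symm)
  have hle : (∑ j, v j ^ 2).totalDegree ≤ g.totalDegree :=
    totalDegree_finsetSum_le fun j _ => (totalDegree_pow _ _).trans (hdeg j)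
  obtain ⟨c, hc, hVc⟩ := exists_eq_mul_C_of_dvd hV hdvd hle
  have hcf : C c * f = ∑ i, u i ^ 2 := by
    apply mul_left_cancel₀ hg
    rw [← heq, hVc]
    ring
  exact (IsSOS.or_neg_of_C_mul hc ⟨l, u, hcf⟩).elim h1 h2
end
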